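/- A unanimity dominated alternative cannot become the unanimity dominant alternative: if alternative a is dominated in the preferences of all agents in a profile P, then for no update order σ is a the UnanDom-consensus alternative of MD_σ(P). -/

import Mathlib

attribute [local instance] Classical.propDecidable

noncomputable section

/-- A preference over the set of alternatives `A`: a binary relation. -/
abbrev Pref (A : Type) := A → A → Prop

/-- A preference is a strict partial order: irreflexive and transitive. -/
def IsPref {A : Type} (pref : Pref A) : Prop :=
  Irreflexive pref ∧ Transitive pref

variable {A : Type} [Fintype A] [DecidableEq A]

/-- The support `n_P(ab)`: the number of agents preferring `a` to `b` in profile `P`. -/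
def support {n : ℕ} (P : Fin n → Pref A) (a b : A) : ℕ :=
  (Finset.univ.filter fun i => P i a b).card

/-- An update order: a list of ordered pairs of distinct alternatives containing,
for each unordered pair `{a, b}` of distinct alternatives, exactly one of `ab` or `ba`,
each exactly once. -/
def IsUpdateOrder (σ : List (A × A)) : Prop :=
  (∀ p ∈ σ, p.1 ≠ p.2) ∧
  (∀ a b : A, a ≠ b → σ.count (a, b) + σ.count (b, a) = 1)

/-- One step of majority dynamics, discussing the pair `p`: agents already ranking
`p.1` versus `p.2` keep their preference; every other agent adds `p.1 ≻ p.2` if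
`n_P(p.1 p.2) ≥ n_P(p.2 p.1)` (ties broken in favour of the first alternative of the
pair), and otherwise adds `p.2 ≻ p.1`, then takes the transitive closure. -/
def mdStep {n : ℕ} (P : Fin n → Pref A) (p : A × A) : Fin n → Pref A :=
  fun i =>
    if P i p.1 p.2 ∨ P i p.2 p.1 then P i
    else if support P p.2 p.1 ≤ support P p.1 p.2 then
      Relation.TransGen (fun x y => P i x y ∨ (x = p.1 ∧ y = p.2))
    else
      Relation.TransGen (fun x y => P i x y ∨ (x = p.2 ∧ y = p.1))

/-- Majority dynamics `MD_σ(P)`: process the pairs of the update order `σ` in order. -/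
def MD {n : ℕ} (σ : List (A × A)) (P : Fin n → Pref A) : Fin n → Pref A :=
  σ.foldl mdStep P

/-- `a` is a Condorcet winner in `P`. -/
def CondorcetWinner {n : ℕ} (P : Fin n → Pref A) (a : A) : Prop :=
  ∀ b, b ≠ a → support P b a < support P a b

/-- `a` is a Condorcet loser in `P`. -/
def CondorcetLoser {n : ℕ} (P : Fin n → Pref A) (a : A) : Prop :=
  ∀ b, b ≠ a → support P a b < support P b a

/-- `a` is undominated in a preference. -/
def Undominated {A : Type} (pref : Pref A) (a : A) : Prop := ∀ b, ¬ pref b a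

/-- `a` is dominant in a preference. -/
def Dominant {A : Type} (pref : Pref A) (a : A) : Prop := ∀ b, b ≠ a → pref a b

/-- `a` is dominated (by every other alternative) in a preference. -/
def DominatedIn {A : Type} (pref : Pref A) (a : A) : Prop := ∀ b, b ≠ a → pref b a

/-- Number of preferences of `P` in which `a` is undominated. -/
def udCount {n : ℕ} (P : Fin n → Pref A) (a : A) : ℕ :=
  (Finset.univ.filter fun i => Undominated (P i) a).card

/-- Number of preferences of `P` in which `a` is dominant. -/
def domCount {n : ℕ} (P : Fin n → Pref A) (a : A) : ℕ :=
  (Finset.univ.filter fun i => Dominant (P i) a).card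

/-- Number of preferences of `P` in which `a` is dominated. -/
def domdCount {n : ℕ} (P : Fin n → Pref A) (a : A) : ℕ :=
  (Finset.univ.filter fun i => DominatedIn (P i) a).card

/-- `a` is undominated in at least one preference and no alternative is undominated
in strictly more preferences than `a`. -/
def PlurUDTop {n : ℕ} (P : Fin n → Pref A) (a : A) : Prop :=
  0 < udCount P a ∧ ∀ b, udCount P b ≤ udCount P a

/-- `a` is the PlurUD-consensus alternative of `P`. -/
def PlurUDConsensus {n : ℕ} (P : Fin n → Pref A) (a : A) : Prop :=
  PlurUDTop P a ∧ ∀ b, PlurUDTop P b → b = a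

/-- `a` is dominant in at least one preference and no alternative is dominant
in strictly more preferences than `a`. -/
def PlurDomTop {n : ℕ} (P : Fin n → Pref A) (a : A) : Prop :=
  0 < domCount P a ∧ ∀ b, domCount P b ≤ domCount P a

/-- `a` is the PlurDom-consensus alternative of `P`. -/
def PlurDomConsensus {n : ℕ} (P : Fin n → Pref A) (a : A) : Prop :=
  PlurDomTop P a ∧ ∀ b, PlurDomTop P b → b = a

/-- `a` is dominated in at least one preference and no alternative is dominated
in strictly more preferences than `a`. -/
def PlurDomdTop {n : ℕ} (P : Fin n → Pref A) (a : A) : Prop :=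
  0 < domdCount P a ∧ ∀ b, domdCount P b ≤ domdCount P a

/-- `a` is the (unique) plurality dominated alternative of `P`. -/
def PlurDomdConsensus {n : ℕ} (P : Fin n → Pref A) (a : A) : Prop :=
  PlurDomdTop P a ∧ ∀ b, PlurDomdTop P b → b = a

/-- `a` is the MajUD-consensus alternative of `P`: undominated in strictly more than
`n / 2` of the preferences, and the unique alternative with this property. -/
def MajUDConsensus {n : ℕ} (P : Fin n → Pref A) (a : A) : Prop :=
  (n < 2 * udCount P a) ∧ ∀ b, n < 2 * udCount P b → b = a

/-- `a` is the MajDom-consensus alternative of `P`: dominant in strictly more than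
`n / 2` of the preferences (such an alternative is automatically unique). -/
def MajDomConsensus {n : ℕ} (P : Fin n → Pref A) (a : A) : Prop :=
  n < 2 * domCount P a

/-- `a` is the UnanUD-consensus alternative of `P`: undominated in every preference,
and the unique alternative with this property. -/
def UnanUDConsensus {n : ℕ} (P : Fin n → Pref A) (a : A) : Prop :=
  (∀ i, Undominated (P i) a) ∧ ∀ b, (∀ i, Undominated (P i) b) → b = a

/-- `a` is the UnanDom-consensus alternative of `P`: dominant in every preference. -/
def UnanDomConsensus {n : ℕ} (P : Fin n → Pref A) (a : A) : Prop :=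
  ∀ i, Dominant (P i) a

/-- A preference is a strict weak ordering: there is an ordered partition of the
alternatives into levels (given by a level function `f`) such that alternatives in the
same level are incomparable, and `a ≻ b` exactly when `a` is in an earlier level. -/
def IsSWO (pref : Pref A) : Prop :=
  ∃ (k : ℕ) (f : A → Fin k), ∀ a b : A, pref a b ↔ f a < f b

/-!
Majority dynamics only ever adds comparisons to an agent's preference. Adding `u ≻ v` to a strict
partial order without `v ≻ u` and closing transitively gives a strict partial order again: a cycle
through the new pair would need `v ≻ u` already. So an alternative dominated for one agent stays
dominated for that agent, and no alternative is both dominated and dominant in a strict partial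
order with at least two alternatives.
-/

section TransGen

variable {α : Type*} {r : α → α → Prop} {u v x y : α}

theorem transGen_or_pair_iff :
    Relation.TransGen (fun x y => r x y ∨ (x = u ∧ y = v)) x y ↔
      Relation.TransGen r x y ∨ (Relation.ReflTransGen r x u ∧ Relation.ReflTransGen r v y) := by
  have hle : r ≤ fun x y => r x y ∨ (x = u ∧ y = v) := fun _ _ => .inl
  constructor
  · intro h
    induction h with
    | single hxy =>
      rcases hxy with hxy | ⟨rfl, rfl⟩
      · exact .inl (.single hxy)
      · exact .inr ⟨.refl, .refl⟩
    | tail _ hyz ih =>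
      rcases hyz with hyz | ⟨rfl, rfl⟩
      · exact ih.imp (·.tail hyz) (.imp_right (·.tail hyz))
      · exact .inr ⟨ih.elim (·.to_reflTransGen) (·.1), .refl⟩
  · rintro (hxy | ⟨hxu, hvy⟩)
    · exact Relation.TransGen.mono hle _ _ hxy
    · have huv : Relation.TransGen (fun x y => r x y ∨ (x = u ∧ y = v)) u v :=
        .single (.inr ⟨rfl, rfl⟩)
      exact (huv.trans_right (Relation.ReflTransGen.mono hle _ _ hxu)).trans_left
        (Relation.ReflTransGen.mono hle _ _ hvy)

end TransGen

section MajorityDynamics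

variable {α : Type} {R S : Pref α} {a u v : α}

/-- The preference of an agent holding `R` after she adopts `u ≻ v`: the transitive closure of `R`
with the pair `(u, v)`. Each update in `mdStep` has this form. -/
def Pref.adjoin (R : Pref α) (u v : α) : Pref α :=
  Relation.TransGen fun x y => R x y ∨ (x = u ∧ y = v)

theorem Pref.le_adjoin (R : Pref α) (u v : α) : R ≤ R.adjoin u v :=
  fun _ _ h => .single (.inl h)

theorem IsPref.adjoin (hR : IsPref R) (huv : u ≠ v) (hvu : ¬ R v u) : IsPref (R.adjoin u v) := by
  have : IsTrans α R := ⟨fun _ _ _ hxy hyz => hR.2 hxy hyz⟩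
  refine ⟨fun x hxx => ?_, fun _ _ _ => Relation.TransGen.trans⟩
  rcases transGen_or_pair_iff.mp hxx with hxx | ⟨hxu, hvx⟩
  · rw [Relation.transGen_eq_self] at hxx
    exact hR.1 x hxx
  · have hvu' := hvx.trans hxu
    rw [Relation.reflTransGen_iff_eq_or_transGen, Relation.transGen_eq_self] at hvu'
    exact hvu'.elim huv hvu

theorem DominatedIn.mono (hRS : R ≤ S) (ha : DominatedIn R a) : DominatedIn S a :=
  fun b hb => hRS b a (ha b hb)

theorem IsPref.not_dominant_of_dominatedIn [Nontrivial α] (hR : IsPref R) (ha : DominatedIn R a) :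
    ¬ Dominant R a := by
  intro hdom
  obtain ⟨b, hb⟩ := exists_ne a
  exact hR.1 a (hR.2 (hdom b hb) (ha b hb))

variable {n : ℕ} {P : Fin n → Pref α} {p : α × α} {σ : List (α × α)} {i : Fin n}

theorem mdStep_eq_self_or_adjoin (P : Fin n → Pref α) (p : α × α) (i : Fin n) :
    mdStep P p i = P i ∨
      (¬ P i p.2 p.1 ∧ mdStep P p i = (P i).adjoin p.1 p.2) ∨
      (¬ P i p.1 p.2 ∧ mdStep P p i = (P i).adjoin p.2 p.1) := by
  unfold mdStep
  split_ifs with hranked hmajority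
  · exact .inl rfl
  · exact .inr (.inl ⟨fun h => hranked (.inr h), rfl⟩)
  · exact .inr (.inr ⟨fun h => hranked (.inl h), rfl⟩)

theorem le_mdStep (P : Fin n → Pref α) (p : α × α) (i : Fin n) : P i ≤ mdStep P p i := by
  rcases mdStep_eq_self_or_adjoin P p i with h | ⟨-, h⟩ | ⟨-, h⟩ <;> rw [h]
  · exact (P i).le_adjoin p.1 p.2
  · exact (P i).le_adjoin p.2 p.1

theorem IsPref.mdStep (hP : IsPref (P i)) (hp : p.1 ≠ p.2) : IsPref (mdStep P p i) := by
  rcases mdStep_eq_self_or_adjoin P p i with h | ⟨hnot, h⟩ | ⟨hnot, h⟩ <;> rw [h]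
  · exact hP
  · exact hP.adjoin hp hnot
  · exact hP.adjoin hp.symm hnot

theorem le_MD (σ : List (α × α)) (P : Fin n → Pref α) (i : Fin n) : P i ≤ MD σ P i := by
  induction σ generalizing P with
  | nil => exact le_rfl
  | cons p σ ih => exact (le_mdStep P p i).trans (ih (mdStep P p))

theorem IsPref.MD (hP : IsPref (P i)) (hσ : ∀ p ∈ σ, p.1 ≠ p.2) : IsPref (MD σ P i) := by
  induction σ generalizing P with
  | nil => exact hP
  | cons p σ ih =>
    obtain ⟨hp, hσ⟩ := List.forall_mem_cons.mp hσ
    exact ih (hP.mdStep hp) hσ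

theorem stmt_12_general [Nontrivial α] (hP : IsPref (P i)) (ha : DominatedIn (P i) a)
    (hσ : ∀ p ∈ σ, p.1 ≠ p.2) : ¬ Dominant (MD σ P i) a :=
  (hP.MD hσ).not_dominant_of_dominatedIn (ha.mono (le_MD σ P i))

end MajorityDynamics

/-- A unanimity dominated alternative cannot become the UnanDom-consensus
alternative (recall the model fixes `m ≥ 3` alternatives and `N = {1, …, n}` nonempty). -/
theorem stmt_12 (hA : 3 ≤ Fintype.card A) {n : ℕ} (hn : 0 < n)
    (P : Fin n → Pref A) (hP : ∀ i, IsPref (P i))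
    (a : A) (ha : ∀ i, DominatedIn (P i) a)
    (σ : List (A × A)) (hσ : IsUpdateOrder σ) :
    ¬ UnanDomConsensus (MD σ P) a := by
  have : Nontrivial A := Fintype.one_lt_card_iff_nontrivial.mp (by lia)
  exact fun hdom => stmt_12_general (hP ⟨0, hn⟩) (ha ⟨0, hn⟩) hσ.1 (hdom ⟨0, hn⟩)

end
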